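/- For every connected pseudograph with n vertices and k hanging edges, the number of valid orientations (every vertex outdegree exactly 2) is at most 24^{n/5} · 18^{-(k-1)/5}. -/

import Mathlib

/-!
If valid orientations exist at all, counting outdegrees gives `m + k = 2 * n`, where `m` is the
number of normal edges, so the bound on the number `N` of valid orientations is equivalent to
`N ^ 5 * 27 ^ n ≤ 2 ^ n * 18 ^ (m + 1)`. In this form the hanging edges only serve to prescribe the
outdegrees `f v ≤ 2` along normal edges, and the bound follows by induction on `n`. Deleting a
vertex `v` of degree `d` that does not disconnect the graph costs a factor `d.choose (f v)`, and
`(d.choose (f v)) ^ 5 * 27 ≤ 2 * 18 ^ d` unless `d = 2` and `f v = 1`. If that exception occurs at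
every such `v`, then two of them are adjacent; after the first is deleted the second is a leaf, so
deleting both costs only a factor `2`, and `2 ^ 5 * 27 ^ 2 = 2 ^ 2 * 18 ^ 3` is exactly what three
deleted edges pay for.
-/

section CutVertices

variable {V : Type*} {G : SimpleGraph V} {r w x : V}

theorem exists_ne_forall_walk_mem_support [Nontrivial V]
    (hw : ¬(G.induce {w}ᶜ).Connected) (r : V) :
    ∃ x ≠ w, ∀ p : G.Walk r x, w ∈ p.support := by
  by_contra! h
  obtain ⟨a, ha⟩ := exists_ne w
  obtain ⟨q, hq⟩ := h a ha
  have hr : r ≠ w := fun hrw ↦ hq (hrw ▸ q.start_mem_support)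
  refine hw ((SimpleGraph.connected_iff_exists_forall_reachable _).2 ⟨⟨r, hr⟩, ?_⟩)
  rintro ⟨x, hx⟩
  obtain ⟨p, hp⟩ := h x hx
  exact ⟨p.induce _ fun y hy ↦ ne_of_mem_of_not_mem hy hp⟩

theorem dist_lt_dist_of_forall_walk_mem_support (hG : G.Connected) (hxw : x ≠ w)
    (hx : ∀ p : G.Walk r x, w ∈ p.support) : G.dist r w < G.dist r x := by
  classical
  obtain ⟨p, hp⟩ := hG.exists_walk_length_eq_dist r x
  calc G.dist r w ≤ (p.takeUntil w (hx p)).length := SimpleGraph.dist_le _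
    _ < p.length := p.length_takeUntil_lt_length (hx p) hxw.symm
    _ = G.dist r x := hp

/-- The vertices cut off from a root by a cut vertex farthest from it are not cut vertices. -/
theorem exists_adj_connected_induce_compl_singleton [Finite V] [Nontrivial V] (hG : G.Connected)
    (hnbr : ∀ v, (G.induce {v}ᶜ).Connected → (G.neighborSet v).Nontrivial) :
    ∃ u v, G.Adj u v ∧ (G.induce {u}ᶜ).Connected ∧ (G.induce {v}ᶜ).Connected := by
  obtain ⟨r⟩ := hG.nonempty
  by_cases hall : ∀ v, (G.induce {v}ᶜ).Connected
  · obtain ⟨y, hy⟩ := (hnbr r (hall r)).nonempty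
    exact ⟨r, y, hy, hall r, hall y⟩
  obtain ⟨w, hw, hmax⟩ := Set.exists_max_image {w | ¬(G.induce {w}ᶜ).Connected} (G.dist r)
    (Set.toFinite _) (not_forall.1 hall)
  have hfar (x : V) (hxw : x ≠ w) (hx : ∀ p : G.Walk r x, w ∈ p.support) :
      (G.induce {x}ᶜ).Connected := by
    by_contra hcut
    exact (hmax x hcut).not_gt (dist_lt_dist_of_forall_walk_mem_support hG hxw hx)
  obtain ⟨a, haw, ha⟩ := exists_ne_forall_walk_mem_support hw r
  obtain ⟨y, hay, hyw⟩ := (hnbr a (hfar a haw ha)).exists_ne w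
  have hy (p : G.Walk r y) : w ∈ p.support := by
    simpa [SimpleGraph.Walk.support_concat, haw.symm] using
      ha (p.concat (SimpleGraph.Adj.symm hay))
  exact ⟨a, y, hay, hfar a haw ha, hfar y hyw hy⟩

end CutVertices

section VertexDeletion

variable {V : Type*} {G : SimpleGraph V}

theorem ncard_preimage_val_compl_singleton (S : Set V) (v : V) :
    {y : ({v}ᶜ : Set V) | (y : V) ∈ S}.ncard = (S \ {v}).ncard := by
  rw [← Set.ncard_image_of_injective _ Subtype.val_injective]
  congr 1
  ext y
  simp [and_comm]

theorem ncard_neighborSet_induce_compl_singleton_add_one [Finite V] {u w : V} (huw : G.Adj u w) :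
    ((G.induce {u}ᶜ).neighborSet ⟨w, huw.ne'⟩).ncard + 1 = (G.neighborSet w).ncard := by
  rw [← Set.ncard_sdiff_singleton_add_one (s := G.neighborSet w) huw.symm (Set.toFinite _),
    ← ncard_preimage_val_compl_singleton]
  rfl

theorem connected_induce_compl_singleton_of_ncard_neighborSet_eq_one (hG : G.Connected) {v : V}
    (hv : (G.neighborSet v).ncard = 1) : (G.induce {v}ᶜ).Connected := by
  have : Finite (G.neighborSet v) := Set.finite_of_ncard_ne_zero (by omega)
  cases nonempty_fintype (G.neighborSet v)
  apply hG.induce_compl_singleton_of_degree_eq_one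
  rw [← G.card_neighborSet_eq_degree, ← Nat.card_eq_fintype_card, Nat.card_coe_set_eq, hv]

theorem ncard_edgeSet_induce_compl_singleton_add [Finite V] (G : SimpleGraph V) (v : V) :
    (G.induce {v}ᶜ).edgeSet.ncard + (G.neighborSet v).ncard = G.edgeSet.ncard := by
  classical
  cases nonempty_fintype V
  have hinduce := G.card_edgeFinset_induce_compl_singleton v
  have hdelete := G.card_edgeFinset_deleteIncidenceSet v
  have hdegree := G.degree_le_card_edgeFinset v
  rw [← G.card_neighborSet_eq_degree, ← Nat.card_eq_fintype_card, Nat.card_coe_set_eq]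
    at hdelete hdegree
  simp only [← Set.ncard_coe_finset, SimpleGraph.coe_edgeFinset] at hinduce hdelete hdegree
  omega

theorem card_compl_singleton_add_one [Finite V] (v : V) :
    Nat.card ({v}ᶜ : Set V) + 1 = Nat.card V := by
  simpa [add_comm] using Set.ncard_add_ncard_compl ({v} : Set V)

end VertexDeletion

section Orientations

variable {V : Type*} {G : SimpleGraph V}

/-- The relation `r` orients `G`, where `r x y` means that there is an edge directed from `x` to
`y`: every edge of `G` is directed in exactly one of its two directions. -/
def IsOrientation (G : SimpleGraph V) (r : V → V → Prop) : Prop :=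
  ∀ x y, r x y ↔ G.Adj x y ∧ ¬r y x

/-- The orientations of `G` in which every vertex `v` has outdegree `f v`. If every vertex
`v` of a pseudograph has `h v ≤ 2` hanging edges, its valid orientations are those with
`f v = 2 - h v`. -/
def prescribedOrientations (G : SimpleGraph V) (f : V → ℕ) : Set (V → V → Prop) :=
  {r | IsOrientation G r ∧ ∀ v, {y | r v y}.ncard = f v}

open Classical in
/-- The outdegrees left to be prescribed on `G - v` when the edges from `v` to `T` are directed
away from `v` and all its other edges are directed towards `v`. -/
noncomputable def residualOutdegree (G : SimpleGraph V) (f : V → ℕ) (v : V) (T : Set V) :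
    ({v}ᶜ : Set V) → ℕ :=
  fun x ↦ if G.Adj x v ∧ (x : V) ∉ T then f x - 1 else f x

theorem residualOutdegree_le (f : V → ℕ) (v : V) (T : Set V) (x : ({v}ᶜ : Set V)) :
    residualOutdegree G f v T x ≤ f x := by
  unfold residualOutdegree
  split_ifs <;> omega

theorem ncard_prescribedOrientations_bot_le_one (f : V → ℕ) :
    (prescribedOrientations (⊥ : SimpleGraph V) f).ncard ≤ 1 := by
  have hsub : prescribedOrientations (⊥ : SimpleGraph V) f ⊆ {fun _ _ ↦ False} := by
    intro r hr
    ext x y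
    simp [hr.1 x y]
  simpa using Set.ncard_le_ncard hsub

theorem induce_mem_prescribedOrientations {f : V → ℕ} {r : V → V → Prop}
    (hr : r ∈ prescribedOrientations G f) (v : V) :
    (fun x y : ({v}ᶜ : Set V) ↦ r x y) ∈
      prescribedOrientations (G.induce {v}ᶜ) (residualOutdegree G f v {y | r v y}) := by
  refine ⟨fun x y ↦ hr.1 x y, fun x ↦ ?_⟩
  have hout : {y : ({v}ᶜ : Set V) | r x y}.ncard = ({y | r x y} \ {v}).ncard :=
    ncard_preimage_val_compl_singleton {y | r x y} v
  have hxv : (G.Adj x v ∧ (x : V) ∉ {y | r v y}) ↔ r x v := (hr.1 x v).symm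
  rw [hout, residualOutdegree, ← hr.2]
  split_ifs with h
  · exact Set.ncard_sdiff_singleton_of_mem (hxv.1 h)
  · rw [Set.sdiff_singleton_eq_self (show v ∉ {y | r x y} from mt hxv.2 h)]

theorem IsOrientation.eq_of_induce_eq {r r' : V → V → Prop} (hr : IsOrientation G r)
    (hr' : IsOrientation G r') {v : V} (hout : {y | r v y} = {y | r' v y})
    (hinduce : ∀ x ≠ v, ∀ y ≠ v, r x y ↔ r' x y) : r = r' := by
  ext x y
  have hv (z : V) : r v z ↔ r' v z := Set.ext_iff.1 hout z
  rcases eq_or_ne x v with rfl | hx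
  · exact hv y
  rcases eq_or_ne y v with rfl | hy
  · rw [hr, hr', hv]
  · exact hinduce x hx y hy

theorem ncard_prescribedOrientations_fiber_le [Finite V] (f : V → ℕ) (v : V) (T : Set V) :
    {r ∈ prescribedOrientations G f | {y | r v y} = T}.ncard ≤
      (prescribedOrientations (G.induce {v}ᶜ) (residualOutdegree G f v T)).ncard := by
  refine Set.ncard_le_ncard_of_injOn (fun r (x y : ({v}ᶜ : Set V)) ↦ r x y) ?_ ?_ (Set.toFinite _)
  · rintro r ⟨hr, rfl⟩
    exact induce_mem_prescribedOrientations hr v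
  · rintro r ⟨hr, hrT⟩ r' ⟨hr', hrT'⟩ heq
    refine hr.1.eq_of_induce_eq hr'.1 (hrT.trans hrT'.symm) fun x hx y hy ↦ ?_
    exact iff_of_eq (congrFun₂ heq ⟨x, hx⟩ ⟨y, hy⟩)

theorem exists_ncard_prescribedOrientations_le_choose_mul [Finite V] (G : SimpleGraph V)
    (f : V → ℕ) (v : V) :
    ∃ f' : ({v}ᶜ : Set V) → ℕ, (∀ x, f' x ≤ f x) ∧
      (prescribedOrientations G f).ncard ≤ (G.neighborSet v).ncard.choose (f v) *
        (prescribedOrientations (G.induce {v}ᶜ) f').ncard := by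
  let outSets := (G.neighborSet v).toFinite.toFinset.powersetCard (f v)
  let residualCount (T : Finset V) :=
    (prescribedOrientations (G.induce {v}ᶜ) (residualOutdegree G f v T)).ncard
  have hcard : outSets.card = (G.neighborSet v).ncard.choose (f v) := by
    rw [Finset.card_powersetCard, ← Set.ncard_eq_toFinset_card]
  have hcover : prescribedOrientations G f ⊆
      ⋃ T ∈ outSets, {r ∈ prescribedOrientations G f | {y | r v y} = (T : Set V)} := by
    intro r hr
    have hnbr : {y | r v y} ⊆ G.neighborSet v := fun y hy ↦ ((hr.1 v y).1 hy).1
    simp only [Set.mem_iUnion]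
    refine ⟨{y | r v y}.toFinite.toFinset, Finset.mem_powersetCard.2 ⟨?_, ?_⟩, hr, by simp⟩
    · simpa using hnbr
    · rw [← Set.ncard_eq_toFinset_card, hr.2]
  have hsum : (prescribedOrientations G f).ncard ≤ ∑ T ∈ outSets, residualCount T :=
    calc (prescribedOrientations G f).ncard
      _ ≤ _ := Set.ncard_le_ncard hcover (Set.toFinite _)
      _ ≤ _ := outSets.set_ncard_biUnion_le _
      _ ≤ _ := Finset.sum_le_sum fun T _ ↦ ncard_prescribedOrientations_fiber_le f v T
  rcases outSets.eq_empty_or_nonempty with hempty | hne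
  · refine ⟨fun x ↦ f x, fun _ ↦ le_rfl, hsum.trans ?_⟩
    simp [hempty]
  · obtain ⟨T, -, hmax⟩ := outSets.exists_max_image residualCount hne
    refine ⟨residualOutdegree G f v T, residualOutdegree_le f v T, hsum.trans ?_⟩
    rw [← hcard]
    exact Finset.sum_le_card_nsmul _ _ _ hmax

theorem exists_ncard_prescribedOrientations_le_two_mul [Finite V] (f : V → ℕ) {u w : V}
    (huw : G.Adj u w) (hu : (G.neighborSet u).ncard = 2) (hfu : f u = 1)
    (hw : ((G.induce {u}ᶜ).neighborSet ⟨w, huw.ne'⟩).ncard = 1) :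
    ∃ f' : ({⟨w, huw.ne'⟩}ᶜ : Set ({u}ᶜ : Set V)) → ℕ, (∀ x, f' x ≤ f x) ∧
      (prescribedOrientations G f).ncard ≤
        2 * (prescribedOrientations ((G.induce {u}ᶜ).induce {⟨w, huw.ne'⟩}ᶜ) f').ncard := by
  obtain ⟨f₁, hf₁, hle₁⟩ := exists_ncard_prescribedOrientations_le_choose_mul G f u
  obtain ⟨f₂, hf₂, hle₂⟩ :=
    exists_ncard_prescribedOrientations_le_choose_mul (G.induce {u}ᶜ) f₁ ⟨w, huw.ne'⟩
  refine ⟨f₂, fun x ↦ (hf₂ x).trans (hf₁ x), hle₁.trans ?_⟩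
  rw [hw] at hle₂
  rw [hu, hfu, Nat.choose_one_right]
  gcongr
  exact hle₂.trans (mul_le_of_le_one_left' (Nat.choose_le_middle _ 1))

end Orientations

section EdgeSources

variable {V : Type*} {G : SimpleGraph V}

/-- The relation describing a choice `o` of a source for every edge: `x` is related to `y` if they
are joined by an edge with source `x`. -/
def sourceRel (o : G.edgeSet → V) (x y : V) : Prop :=
  ∃ hxy : G.Adj x y, o ⟨s(x, y), hxy⟩ = x

theorem sourceRel_iff {o : G.edgeSet → V} {x y : V} (hxy : G.Adj x y) :
    sourceRel o x y ↔ o ⟨s(x, y), hxy⟩ = x :=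
  exists_prop_of_true hxy

theorem isOrientation_sourceRel {o : G.edgeSet → V} (ho : ∀ e : G.edgeSet, o e ∈ (e : Sym2 V)) :
    IsOrientation G (sourceRel o) := by
  intro x y
  by_cases hxy : G.Adj x y
  · have hswap : (⟨s(y, x), hxy.symm⟩ : G.edgeSet) = ⟨s(x, y), hxy⟩ := Subtype.ext Sym2.eq_swap
    rw [sourceRel_iff hxy, sourceRel_iff hxy.symm, hswap]
    rcases Sym2.mem_iff.1 (ho ⟨s(x, y), hxy⟩) with h | h
    · simp [h, hxy, hxy.ne]
    · simp [h, hxy.ne']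
  · exact iff_of_false (fun h ↦ hxy h.1) fun h ↦ hxy h.1

theorem exists_eq_mk_of_mem {e : G.edgeSet} {v : V} (hv : v ∈ (e : Sym2 V)) :
    ∃ y, ∃ hvy : G.Adj v y, e = ⟨s(v, y), hvy⟩ := by
  obtain ⟨e, he⟩ := e
  obtain ⟨y, rfl⟩ := hv
  exact ⟨y, he, rfl⟩

theorem ncard_setOf_sourceRel {o : G.edgeSet → V} (ho : ∀ e : G.edgeSet, o e ∈ (e : Sym2 V))
    (v : V) : {y | sourceRel o v y}.ncard = {e : G.edgeSet | o e = v}.ncard := by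
  refine Set.ncard_congr (fun y hy ↦ ⟨s(v, y), hy.1⟩) (fun y hy ↦ hy.2) ?_ ?_
  · exact fun y z hy hz hyz ↦ Sym2.congr_right.1 (congrArg Subtype.val hyz)
  · intro e he
    obtain ⟨y, hvy, rfl⟩ := exists_eq_mk_of_mem (he ▸ ho e)
    exact ⟨y, ⟨hvy, he⟩, rfl⟩

theorem injOn_sourceRel :
    Set.InjOn sourceRel {o : G.edgeSet → V | ∀ e : G.edgeSet, o e ∈ (e : Sym2 V)} := by
  intro o ho o' _ heq
  ext e
  obtain ⟨y, hxy, he⟩ := exists_eq_mk_of_mem (ho e)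
  have hsource : sourceRel o (o e) y := ⟨hxy, congrArg o he.symm⟩
  rw [heq, sourceRel_iff hxy, ← he] at hsource
  exact hsource.symm

theorem ncard_sourceOrientations_le [Finite V] (f : V → ℕ) :
    {o : G.edgeSet → V | (∀ e : G.edgeSet, o e ∈ (e : Sym2 V)) ∧
      ∀ v, {e : G.edgeSet | o e = v}.ncard = f v}.ncard ≤
    (prescribedOrientations G f).ncard := by
  refine Set.ncard_le_ncard_of_injOn sourceRel ?_ (injOn_sourceRel.mono fun o ho ↦ ho.1)
    (Set.toFinite _)
  rintro o ⟨ho, hout⟩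
  exact ⟨isOrientation_sourceRel ho, fun v ↦ (ncard_setOf_sourceRel ho v).trans (hout v)⟩

end EdgeSources

section Counting

theorem choose_two_pow_five_mul_le {d : ℕ} (hd : 4 ≤ d) : d.choose 2 ^ 5 * 27 ≤ 2 * 18 ^ d := by
  induction d, hd using Nat.le_induction with
  | base => decide
  | succ d hd ih =>
    have hratio : (d + 1).choose 2 * 3 ≤ 5 * d.choose 2 := by
      have hsucc : (d + 1).choose 2 = d + d.choose 2 := by
        simpa using Nat.choose_succ_succ d 1
      have htwo : d.choose 2 * 2 = d * (d - 1) := by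
        rw [Nat.choose_two_right, Nat.div_mul_cancel (Nat.even_mul_pred_self d).two_dvd]
      have : d * 3 ≤ d * (d - 1) := Nat.mul_le_mul_left d (by omega)
      omega
    have hpow : (d + 1).choose 2 ^ 5 ≤ 18 * d.choose 2 ^ 5 := by
      have := Nat.pow_le_pow_left hratio 5
      rw [mul_pow, mul_pow] at this
      omega
    calc (d + 1).choose 2 ^ 5 * 27 ≤ 18 * d.choose 2 ^ 5 * 27 := by gcongr
      _ = 18 * (d.choose 2 ^ 5 * 27) := by ring
      _ ≤ 18 * (2 * 18 ^ d) := by gcongr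
      _ = 2 * 18 ^ (d + 1) := by ring

theorem choose_pow_five_mul_le {d s : ℕ} (hd : 1 ≤ d) (hs : s ≤ 2) (hds : ¬(d = 2 ∧ s = 1)) :
    d.choose s ^ 5 * 27 ≤ 2 * 18 ^ d := by
  rcases lt_or_ge d 4 with hlt | hge
  · interval_cases d <;> interval_cases s <;> first | decide | simp at hds
  · have hmono : d.choose s ≤ d.choose 2 := by
      have h01 : d.choose 0 ≤ d.choose 1 := Nat.choose_le_succ_of_lt_half_left (by omega)
      have h12 : d.choose 1 ≤ d.choose 2 := Nat.choose_le_succ_of_lt_half_left (by omega)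
      interval_cases s
      exacts [h01.trans h12, h12, le_rfl]
    calc d.choose s ^ 5 * 27 ≤ d.choose 2 ^ 5 * 27 := by gcongr
      _ ≤ 2 * 18 ^ d := choose_two_pow_five_mul_le hge

theorem pow_five_mul_le_of_le_mul {N N' C n m j d : ℕ} (hN : N ≤ C * N')
    (hC : C ^ 5 * 27 ^ j ≤ 2 ^ j * 18 ^ d) (hN' : N' ^ 5 * 27 ^ n ≤ 2 ^ n * 18 ^ (m + 1)) :
    N ^ 5 * 27 ^ (n + j) ≤ 2 ^ (n + j) * 18 ^ (m + d + 1) :=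
  calc N ^ 5 * 27 ^ (n + j) ≤ (C * N') ^ 5 * 27 ^ (n + j) := by gcongr
    _ = (C ^ 5 * 27 ^ j) * (N' ^ 5 * 27 ^ n) := by ring
    _ ≤ (2 ^ j * 18 ^ d) * (2 ^ n * 18 ^ (m + 1)) := by gcongr
    _ = 2 ^ (n + j) * 18 ^ (m + d + 1) := by ring

theorem le_rpow_mul_rpow_of_pow_five_mul_le {N n m k : ℕ}
    (hN : N ^ 5 * 27 ^ n ≤ 2 ^ n * 18 ^ (m + 1)) (hmk : m + k = 2 * n) :
    (N : ℝ) ≤ (24 : ℝ) ^ ((n : ℝ) / 5) * (18 : ℝ) ^ (-(((k : ℝ) - 1) / 5)) := by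
  have hnat : N ^ 5 * 18 ^ k ≤ 24 ^ n * 18 := by
    refine Nat.le_of_mul_le_mul_right ?_ (show 0 < 27 ^ n by positivity)
    calc N ^ 5 * 18 ^ k * 27 ^ n = N ^ 5 * 27 ^ n * 18 ^ k := by ring
      _ ≤ 2 ^ n * 18 ^ (m + 1) * 18 ^ k := by gcongr
      _ = 2 ^ n * 18 ^ (m + k) * 18 := by ring
      _ = (2 * 18 ^ 2) ^ n * 18 := by rw [hmk, pow_mul, mul_pow]
      _ = (24 * 27) ^ n * 18 := by norm_num
      _ = 24 ^ n * 18 * 27 ^ n := by rw [mul_pow, mul_right_comm]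
  have hreal : (N : ℝ) ^ 5 * 18 ^ k ≤ 24 ^ n * 18 := by exact_mod_cast hnat
  refine le_of_pow_le_pow_left₀ (n := 5) (by norm_num) (by positivity) ?_
  calc (N : ℝ) ^ 5 ≤ 24 ^ n * 18 / 18 ^ k := (le_div_iff₀ (by positivity)).2 hreal
    _ = (24 : ℝ) ^ (n : ℝ) * (18 : ℝ) ^ (1 - (k : ℝ)) := by
      rw [Real.rpow_sub (by norm_num), Real.rpow_natCast, Real.rpow_natCast, Real.rpow_one,
        mul_div_assoc]
    _ = ((24 : ℝ) ^ ((n : ℝ) / 5) * (18 : ℝ) ^ (-(((k : ℝ) - 1) / 5))) ^ 5 := by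
      rw [mul_pow, ← Real.rpow_mul_natCast (by norm_num), ← Real.rpow_mul_natCast (by norm_num)]
      congr 2 <;> push_cast <;> ring

theorem sum_ncard_fiber {α β : Type*} [Finite α] [Fintype β] (g : α → β) :
    ∑ b, {a | g a = b}.ncard = Nat.card α := by
  rw [← Nat.card_congr (Equiv.sigmaFiberEquiv g), Nat.card_sigma]
  rfl

end Counting

theorem ncard_prescribedOrientations_pow_five_mul_le {V : Type*} [Finite V] {G : SimpleGraph V}
    (hG : G.Connected) {f : V → ℕ} (hf : ∀ v, f v ≤ 2) :
    (prescribedOrientations G f).ncard ^ 5 * 27 ^ Nat.card V ≤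
      2 ^ Nat.card V * 18 ^ (G.edgeSet.ncard + 1) := by
  induction hn : Nat.card V using Nat.strong_induction_on generalizing V with | _ n ih
  subst hn
  rcases subsingleton_or_nontrivial V with hsub | hnontriv
  · have := hG.nonempty
    obtain rfl : G = ⊥ := Subsingleton.elim G ⊥
    have hle := Nat.pow_le_pow_left (ncard_prescribedOrientations_bot_le_one f) 5
    simp only [Nat.card_unique, SimpleGraph.edgeSet_bot, Set.ncard_empty]
    omega
  by_cases hv : ∃ v, (G.induce {v}ᶜ).Connected ∧ ¬((G.neighborSet v).ncard = 2 ∧ f v = 1)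
  · obtain ⟨v, hconn, hdeg⟩ := hv
    obtain ⟨f', hf', hle⟩ := exists_ncard_prescribedOrientations_le_choose_mul G f v
    have hpos : 1 ≤ (G.neighborSet v).ncard :=
      (Set.ncard_pos (Set.toFinite _)).2 (hG.preconnected.exists_adj_of_nontrivial v)
    have hcard := card_compl_singleton_add_one v
    rw [← hcard, ← ncard_edgeSet_induce_compl_singleton_add G v]
    refine pow_five_mul_le_of_le_mul hle ?_
      (ih _ (by omega) hconn (fun x ↦ (hf' x).trans (hf x)) rfl)
    simpa using choose_pow_five_mul_le hpos (hf v) hdeg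
  · push Not at hv
    obtain ⟨u, w, huw, hu, hw⟩ := exists_adj_connected_induce_compl_singleton hG fun v hconn ↦
      Set.one_lt_ncard_iff_nontrivial.1 (by rw [(hv v hconn).1]; norm_num)
    have hleaf : ((G.induce {u}ᶜ).neighborSet ⟨w, huw.ne'⟩).ncard = 1 := by
      have := ncard_neighborSet_induce_compl_singleton_add_one huw
      have := (hv w hw).1
      omega
    obtain ⟨f', hf', hle⟩ :=
      exists_ncard_prescribedOrientations_le_two_mul f huw (hv u hu).1 (hv u hu).2 hleaf
    have hcard₁ := card_compl_singleton_add_one u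
    have hcard₂ := card_compl_singleton_add_one (⟨w, huw.ne'⟩ : ({u}ᶜ : Set V))
    rw [← hcard₁, ← hcard₂, ← ncard_edgeSet_induce_compl_singleton_add G u, (hv u hu).1,
      ← ncard_edgeSet_induce_compl_singleton_add (G.induce {u}ᶜ) ⟨w, huw.ne'⟩, hleaf]
    exact pow_five_mul_le_of_le_mul (j := 2) (d := 3) hle (by norm_num)
      (ih _ (by rw [← hcard₁, ← hcard₂]; omega)
        (connected_induce_compl_singleton_of_ncard_neighborSet_eq_one hu hleaf)
        (fun x ↦ (hf' x).trans (hf x)) rfl)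

/-- Theorem 3.8: for every connected pseudograph with `n` vertices and `k`
hanging edges (normal subgraph `G`, hanging edges `H` with endpoint map
`hend`), the number of valid orientations — orientations of the normal edges,
each edge getting a source among its endpoints, in which every vertex has
total outdegree exactly 2 (hanging edges counting as outgoing) — is at most
`24^(n/5) · 18^(-(k-1)/5)`. -/
theorem pseudograph_valid_orientation_bound
    {V H : Type*} [Fintype V] [Fintype H]
    (G : SimpleGraph V) (hend : H → V)
    (hconn : G.Connected) :
    (Set.ncard {o : G.edgeSet → V |
        (∀ e : G.edgeSet, o e ∈ (e : Sym2 V)) ∧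
        ∀ v : V, Set.ncard {e : G.edgeSet | o e = v}
          + Set.ncard {h : H | hend h = v} = 2} : ℝ)
      ≤ (24 : ℝ) ^ ((Fintype.card V : ℝ) / 5) *
        (18 : ℝ) ^ (-(((Fintype.card H : ℝ) - 1) / 5)) := by
  rcases Set.eq_empty_or_nonempty {o : G.edgeSet → V | (∀ e : G.edgeSet, o e ∈ (e : Sym2 V)) ∧
    ∀ v : V, Set.ncard {e : G.edgeSet | o e = v} + Set.ncard {h : H | hend h = v} = 2}
    with hempty | ⟨o, -, ho⟩
  · rw [hempty, Set.ncard_empty, Nat.cast_zero]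
    positivity
  have hcount : G.edgeSet.ncard + Fintype.card H = 2 * Fintype.card V := by
    have hsum := Finset.sum_congr rfl fun v (_ : v ∈ Finset.univ) ↦ ho v
    rw [Finset.sum_add_distrib, sum_ncard_fiber, sum_ncard_fiber] at hsum
    simpa [mul_comm] using hsum
  have hsources := ncard_sourceOrientations_le (G := G) fun v ↦ 2 - {h : H | hend h = v}.ncard
  have hbound := ncard_prescribedOrientations_pow_five_mul_le hconn
    fun v ↦ Nat.sub_le 2 {h : H | hend h = v}.ncard
  rw [Nat.card_eq_fintype_card] at hbound
  refine le_rpow_mul_rpow_of_pow_five_mul_le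
    ((Nat.mul_le_mul_right _ (Nat.pow_le_pow_left (le_trans ?_ hsources) 5)).trans hbound) hcount
  exact Set.ncard_le_ncard fun o ho ↦ ⟨ho.1, fun v ↦ Nat.eq_sub_of_add_eq (ho.2 v)⟩
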